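/- arXiv:1609.07531 — 2 statements merged into one kernel-verified Lean document; each statement's English description precedes it below -/
import Mathlib

section
/- For any vertex u of G, any sets S_0, S_1 of neighbors of u (padded with null), with S'_0 = S_0∖S_1 and S'_1 = S_1∖S_0 viewed as arrays of common length k, we have −δ_u(S_0,S_1) = max_{π∈Π[k]} Σ_{i=1}^k vote_u(S'_1[i], S'_0[π(i)]), where the maximum is over all permutations π of {1,…,k}. Consequently δ_u(S_0,S_1) + δ_u(S_1,S_0) ≤ 0, and for any two matchings M_0, M_1 and any vertex u, Δ_u(M_0,M_1) + Δ_u(M_1,M_0) ≤ 0. -/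
/-!
Many-to-many matchings with two-sided preferences, votes, and popularity,
following "Popular Matchings in the Many-to-Many Setting".
-/

/-- The vote of a vertex with rank function `r` (smaller rank = more preferred)
comparing two options, where `none` stands for `null` (ranked below everything). -/
def vote {β : Type*} [DecidableEq β] (r : β → ℕ) : Option β → Option β → ℤ
  | none, none => 0
  | some _, none => 1
  | none, some _ => -1
  | some x, some y => if x = y then 0 else if r x < r y then 1 else -1

/-- The common length `k` of the arrays compared in `δ_u(S₀,S₁)`:
after padding the smaller of `S₀, S₁` with nulls and removing common elements. -/
def kOf {β : Type*} [DecidableEq β] (S₀ S₁ : Finset β) : ℕ :=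
  max S₀.card S₁.card - (S₀ ∩ S₁).card

/-- `S₀ ∖ S₁`, viewed as an array of `Option`s padded with `none` (null) to length `k`. -/
noncomputable def padded {β : Type*} [DecidableEq β] (S₀ S₁ : Finset β) (k : ℕ) : List (Option β) :=
  ((S₀ \ S₁).toList.map some) ++ List.replicate (k - (S₀ \ S₁).card) none

/-- `δ_u(S₀,S₁)`: the minimum, over all permutations `σ` of `{1,…,k}`, of
`Σ_i vote_u(S'₀[i], S'₁[σ(i)])`. -/
noncomputable def deltaSet {β : Type*} [DecidableEq β] (r : β → ℕ) (S₀ S₁ : Finset β) : ℤ :=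
  Finset.univ.inf' ⟨1, Finset.mem_univ 1⟩ fun σ : Equiv.Perm (Fin (kOf S₀ S₁)) =>
    ∑ i : Fin (kOf S₀ S₁),
      vote r ((padded S₀ S₁ (kOf S₀ S₁)).getD (i : ℕ) none)
             ((padded S₁ S₀ (kOf S₀ S₁)).getD (σ i : ℕ) none)

/-- A bipartite instance `G = (A ∪ B, E)` with capacities `≥ 1` and strict
preferences of every vertex over its neighbors (given by injective-on-neighbors
rank functions; smaller rank = more preferred). -/
structure PrefInstance (α β : Type*) [Fintype α] [Fintype β] [DecidableEq α] [DecidableEq β] where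
  E : Finset (α × β)
  capA : α → ℕ
  capB : β → ℕ
  rankA : α → β → ℕ
  rankB : β → α → ℕ
  capA_pos : ∀ a, 1 ≤ capA a
  capB_pos : ∀ b, 1 ≤ capB b
  rankA_injOn : ∀ a, Set.InjOn (rankA a) {b | (a, b) ∈ E}
  rankB_injOn : ∀ b, Set.InjOn (rankB b) {a | (a, b) ∈ E}

namespace PrefInstance

variable {α β : Type*} [Fintype α] [Fintype β] [DecidableEq α] [DecidableEq β]

/-- `M(a)`: the set of `B`-vertices matched to `a` in `M`. -/
def rowSet (M : Finset (α × β)) (a : α) : Finset β :=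
  Finset.univ.filter fun b => (a, b) ∈ M

/-- `M(b)`: the set of `A`-vertices matched to `b` in `M`. -/
def colSet (M : Finset (α × β)) (b : β) : Finset α :=
  Finset.univ.filter fun a => (a, b) ∈ M

variable (I : PrefInstance α β)

/-- `M` is a matching in `G`: a subset of `E` respecting all capacities. -/
def IsMatching (M : Finset (α × β)) : Prop :=
  M ⊆ I.E ∧ (∀ a, (rowSet M a).card ≤ I.capA a) ∧ (∀ b, (colSet M b).card ≤ I.capB b)

/-- `Δ_a(M₀,M₁) = δ_a(M₀(a), M₁(a))` for `a ∈ A`. -/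
noncomputable def DeltaA (M₀ M₁ : Finset (α × β)) (a : α) : ℤ :=
  deltaSet (I.rankA a) (rowSet M₀ a) (rowSet M₁ a)

/-- `Δ_b(M₀,M₁) = δ_b(M₀(b), M₁(b))` for `b ∈ B`. -/
noncomputable def DeltaB (M₀ M₁ : Finset (α × β)) (b : β) : ℤ :=
  deltaSet (I.rankB b) (colSet M₀ b) (colSet M₁ b)

/-- `Δ(M₀,M₁) = Σ_{u ∈ A∪B} Δ_u(M₀,M₁)`. -/
noncomputable def Delta (M₀ M₁ : Finset (α × β)) : ℤ :=
  (∑ a, I.DeltaA M₀ M₁ a) + ∑ b, I.DeltaB M₀ M₁ b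

/-- `M` is a popular matching: `Δ(M,T) ≥ 0` against every matching `T`. -/
def Popular (M : Finset (α × β)) : Prop :=
  I.IsMatching M ∧ ∀ T, I.IsMatching T → 0 ≤ I.Delta M T

/-- `M` is a weakly popular matching: `Δ(T,M) ≤ 0` for every matching `T`. -/
def WeaklyPopular (M : Finset (α × β)) : Prop :=
  I.IsMatching M ∧ ∀ T, I.IsMatching T → I.Delta T M ≤ 0

/-- The edge `(a,b) ∈ E ∖ M` blocks `M`. -/
def Blocks (M : Finset (α × β)) (a : α) (b : β) : Prop :=
  (a, b) ∈ I.E ∧ (a, b) ∉ M ∧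
  ((rowSet M a).card < I.capA a ∨ ∃ b' ∈ rowSet M a, I.rankA a b < I.rankA a b') ∧
  ((colSet M b).card < I.capB b ∨ ∃ a' ∈ colSet M b, I.rankB b a < I.rankB b a')

/-- `M` is a pairwise-stable matching: no edge blocks it. -/
def Stable (M : Finset (α × β)) : Prop :=
  I.IsMatching M ∧ ∀ a b, ¬ I.Blocks M a b

end PrefInstance

/-!
The sum for a pairing of two arrays, read from the other array, is the sum of the reversed votes
for the inverse pairing. Reversing a vote negates it when there is no tie between the two arrays,
so the minimum `δ_u(S₀,S₁)` turns, up to sign, into the maximum over the pairings read from `S₁`.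

For `δ_u(S₀,S₁) + δ_u(S₁,S₀) ≤ 0` it is enough to bound both minima by the sums for the identity
pairing, because a vote and its reverse never add up to more than `0`.
-/

section Vote

variable {β : Type*} [DecidableEq β] (r : β → ℕ)

-- The sum can be negative: on a tie `r a = r b` with `a ≠ b`, `vote` is `-1` in both directions.
lemma vote_add_vote_swap_nonpos (x y : Option β) : vote r x y + vote r y x ≤ 0 := by
  rcases x with _ | a <;> rcases y with _ | b <;> grind [vote]

variable {r}

lemma neg_vote {x y : Option β} (h : ∀ a ∈ x, ∀ b ∈ y, r a = r b → a = b) :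
    -vote r x y = vote r y x := by
  rcases x with _ | a <;> rcases y with _ | b <;> grind [vote]

end Vote

section PairingVote

variable {β ι : Type*} [DecidableEq β] [Fintype ι]

/-- The total vote `Σ_i vote_u(f[i], g[σ(i)])` of the array `f` against the array `g` under the
pairing `σ`; the objective minimized in `δ_u`. -/
def pairingVote (r : β → ℕ) (f g : ι → Option β) (σ : Equiv.Perm ι) : ℤ :=
  ∑ i, vote r (f i) (g (σ i))

lemma pairingVote_inv (r : β → ℕ) (f g : ι → Option β) (σ : Equiv.Perm ι) :
    pairingVote r f g σ⁻¹ = ∑ i, vote r (f (σ i)) (g i) := by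
  simpa [pairingVote] using (Equiv.sum_comp σ fun i => vote r (f i) (g (σ⁻¹ i))).symm

lemma neg_pairingVote {r : β → ℕ} {f g : ι → Option β}
    (h : ∀ i j, ∀ a ∈ f i, ∀ b ∈ g j, r a = r b → a = b) (σ : Equiv.Perm ι) :
    -pairingVote r f g σ = pairingVote r g f σ⁻¹ := by
  rw [pairingVote_inv, pairingVote, ← Finset.sum_neg_distrib]
  exact Finset.sum_congr rfl fun i _ => neg_vote (h i (σ i))

lemma pairingVote_one_add_swap_nonpos (r : β → ℕ) (f g : ι → Option β) :
    pairingVote r f g 1 + pairingVote r g f 1 ≤ 0 := by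
  rw [pairingVote, pairingVote, ← Finset.sum_add_distrib]
  exact Finset.sum_nonpos fun i _ => vote_add_vote_swap_nonpos r (f i) (g i)

end PairingVote

section Extrema

lemma neg_finset_inf' {G ι : Type*} [Lattice G] [AddGroup G] [AddLeftMono G] [AddRightMono G]
    {s : Finset ι} (hs : s.Nonempty) (f : ι → G) :
    -s.inf' hs f = s.sup' hs fun i => -f i :=
  map_finset_inf' (OrderIso.neg G) hs f

lemma sup'_univ_comp_equiv {α ι κ : Type*} [SemilatticeSup α] [Fintype ι] [Fintype κ]
    (e : ι ≃ κ) (hι : (Finset.univ : Finset ι).Nonempty) (hκ : (Finset.univ : Finset κ).Nonempty)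
    (f : κ → α) : Finset.univ.sup' hι (fun i => f (e i)) = Finset.univ.sup' hκ f := by
  simpa using Finset.sup'_comp_eq_map (f := e.toEmbedding) f hι

end Extrema

section DeltaSet

variable {β : Type*} [DecidableEq β]

/-- The array `S'₀` of `δ_u(S₀,S₁)`: the list `padded S₀ S₁ k` as a function on indices. The
length `k` is free because `kOf S₀ S₁` and `kOf S₁ S₀` are equal but not definitionally so. -/
noncomputable def paddedArray (S₀ S₁ : Finset β) (k : ℕ) (i : Fin k) : Option β :=
  (padded S₀ S₁ k).getD i none

lemma mem_of_mem_paddedArray {S₀ S₁ : Finset β} {k : ℕ} {i : Fin k} {b : β}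
    (h : b ∈ paddedArray S₀ S₁ k i) : b ∈ S₀ := by
  have hmem : some b ∈ padded S₀ S₁ k := by
    grind [paddedArray, Option.mem_def]
  have hsdiff : b ∈ S₀ \ S₁ := by
    simpa [padded] using hmem
  exact (Finset.mem_sdiff.mp hsdiff).1

lemma kOf_comm (S₀ S₁ : Finset β) : kOf S₀ S₁ = kOf S₁ S₀ := by
  rw [kOf, kOf, max_comm, Finset.inter_comm]

lemma deltaSet_le_pairingVote (r : β → ℕ) {S₀ S₁ : Finset β} {k : ℕ} (hk : kOf S₀ S₁ = k)
    (σ : Equiv.Perm (Fin k)) :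
    deltaSet r S₀ S₁ ≤ pairingVote r (paddedArray S₀ S₁ k) (paddedArray S₁ S₀ k) σ := by
  subst hk
  exact Finset.inf'_le (pairingVote r (paddedArray S₀ S₁ _) (paddedArray S₁ S₀ _))
    (Finset.mem_univ σ)

lemma neg_deltaSet {r : β → ℕ} {S₀ S₁ : Finset β}
    (h : ∀ x ∈ S₀, ∀ y ∈ S₁, r x = r y → x = y) :
    -deltaSet r S₀ S₁ = Finset.univ.sup' Finset.univ_nonempty
      (pairingVote r (paddedArray S₁ S₀ (kOf S₀ S₁)) (paddedArray S₀ S₁ (kOf S₀ S₁))) := by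
  set f := paddedArray S₀ S₁ (kOf S₀ S₁)
  set g := paddedArray S₁ S₀ (kOf S₀ S₁)
  have hfg : ∀ i j, ∀ x ∈ f i, ∀ y ∈ g j, r x = r y → x = y := fun _ _ x hx y hy =>
    h x (mem_of_mem_paddedArray hx) y (mem_of_mem_paddedArray hy)
  calc -deltaSet r S₀ S₁
      = Finset.univ.sup' Finset.univ_nonempty (fun σ => -pairingVote r f g σ) :=
        neg_finset_inf' _ _
    _ = Finset.univ.sup' Finset.univ_nonempty (fun σ => pairingVote r g f σ⁻¹) := by
        simp only [neg_pairingVote hfg]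
    _ = Finset.univ.sup' Finset.univ_nonempty (pairingVote r g f) :=
        sup'_univ_comp_equiv (Equiv.inv _) _ _ _

lemma deltaSet_add_swap_nonpos (r : β → ℕ) (S₀ S₁ : Finset β) :
    deltaSet r S₀ S₁ + deltaSet r S₁ S₀ ≤ 0 :=
  (add_le_add (deltaSet_le_pairingVote r rfl 1)
    (deltaSet_le_pairingVote r (kOf_comm S₁ S₀) 1)).trans
    (pairingVote_one_add_swap_nonpos r _ _)

end DeltaSet

theorem statement0_general {β : Type*} [DecidableEq β] (r : β → ℕ) (S₀ S₁ : Finset β) :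
    ((∀ x ∈ S₀, ∀ y ∈ S₁, r x = r y → x = y) →
      -deltaSet r S₀ S₁ =
        Finset.univ.sup' ⟨1, Finset.mem_univ 1⟩
          fun π : Equiv.Perm (Fin (kOf S₀ S₁)) =>
            ∑ i : Fin (kOf S₀ S₁),
              vote r ((padded S₁ S₀ (kOf S₀ S₁)).getD (i : ℕ) none)
                ((padded S₀ S₁ (kOf S₀ S₁)).getD (π i : ℕ) none)) ∧
    deltaSet r S₀ S₁ + deltaSet r S₁ S₀ ≤ 0 :=
  ⟨neg_deltaSet, deltaSet_add_swap_nonpos r S₀ S₁⟩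

/-- For any vertex `u` of `G` and sets `S₀, S₁` of neighbors of `u`,
`−δ_u(S₀,S₁) = max_{π ∈ Π[k]} Σ_i vote_u(S'₁[i], S'₀[π(i)])`; consequently
`δ_u(S₀,S₁) + δ_u(S₁,S₀) ≤ 0`, and for any two matchings `M₀, M₁` and any vertex `u`,
`Δ_u(M₀,M₁) + Δ_u(M₁,M₀) ≤ 0`. -/
theorem statement0 {α β : Type*} [Fintype α] [Fintype β] [DecidableEq α] [DecidableEq β]
    (I : PrefInstance α β) (a : α) (S₀ S₁ : Finset β)
    (h₀ : ∀ b ∈ S₀, (a, b) ∈ I.E) (h₁ : ∀ b ∈ S₁, (a, b) ∈ I.E) :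
    (- deltaSet (I.rankA a) S₀ S₁ =
      Finset.univ.sup' ⟨1, Finset.mem_univ 1⟩
        fun π : Equiv.Perm (Fin (kOf S₀ S₁)) =>
          ∑ i : Fin (kOf S₀ S₁),
            vote (I.rankA a) ((padded S₁ S₀ (kOf S₀ S₁)).getD (i : ℕ) none)
              ((padded S₀ S₁ (kOf S₀ S₁)).getD (π i : ℕ) none)) ∧
    deltaSet (I.rankA a) S₀ S₁ + deltaSet (I.rankA a) S₁ S₀ ≤ 0 ∧
    (∀ M₀ M₁ : Finset (α × β), I.IsMatching M₀ → I.IsMatching M₁ →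
      (∀ u : α, I.DeltaA M₀ M₁ u + I.DeltaA M₁ M₀ u ≤ 0) ∧
      (∀ u : β, I.DeltaB M₀ M₁ u + I.DeltaB M₁ M₀ u ≤ 0)) :=
  ⟨(statement0_general _ S₀ S₁).1 fun _ hx _ hy => I.rankA_injOn a (h₀ _ hx) (h₁ _ hy),
    (statement0_general _ S₀ S₁).2, fun _ _ _ _ =>
      ⟨fun _ => (statement0_general _ _ _).2, fun _ => (statement0_general _ _ _).2⟩⟩
end

section
/- Let N be a matching in G. For every matching T in G there exists an (A'∪B')-complete matching T* in the graph G'_N such that wt_N(T*) = −Δ(N,T), where wt_N(T*) is the sum of the edge weights wt_N(e) over the edges e of T*. -/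
namespace PrefInstance

variable {α β : Type*} [Fintype α] [Fintype β] [DecidableEq α] [DecidableEq β]
variable (I : PrefInstance α β)

/-- `A'`: the set of clones `a_i`, `1 ≤ i ≤ cap(a)`, of the vertices of `A`. -/
abbrev CloneA := (a : α) × Fin (I.capA a)

/-- `B'`: the set of clones `b_j`, `1 ≤ j ≤ cap(b)`, of the vertices of `B`. -/
abbrev CloneB := (b : β) × Fin (I.capB b)

/-- `N'` is a realization of the matching `N` on the cloned vertex sets: a
(one-to-one) matching on `A' × B'` whose projection is a bijection onto `N`. -/
def IsRealization (N : Finset (α × β)) (N' : Finset (I.CloneA × I.CloneB)) : Prop :=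
  (∀ e ∈ N', ∀ f ∈ N', e.1 = f.1 → e = f) ∧
  (∀ e ∈ N', ∀ f ∈ N', e.2 = f.2 → e = f) ∧
  N'.image (fun e => (e.1.1, e.2.1)) = N ∧
  N'.card = N.card

/-- The partner of `x ∈ A'` in a one-to-one matching `N'` on clones (`none` if unmatched,
i.e. matched to the last resort `ℓ(x)` in `N*`). -/
noncomputable def partnerA (N' : Finset (I.CloneA × I.CloneB)) (x : I.CloneA) :
    Option I.CloneB :=
  if h : ∃ y, (x, y) ∈ N' then some h.choose else none

/-- The partner of `y ∈ B'` in a one-to-one matching `N'` on clones (`none` if unmatched). -/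
noncomputable def partnerB (N' : Finset (I.CloneA × I.CloneB)) (y : I.CloneB) :
    Option I.CloneA :=
  if h : ∃ x, (x, y) ∈ N' then some h.choose else none

/-- `(x, y) ∈ A' × B'` is an edge of the graph `G'_N`: either the underlying pair is an
edge of `E ∖ N` (all clone copies present), or `(x,y)` is the unique copy in `N'` of an
edge of `N`. -/
def GNEdge (N : Finset (α × β)) (N' : Finset (I.CloneA × I.CloneB))
    (x : I.CloneA) (y : I.CloneB) : Prop :=
  ((x.1, y.1) ∈ I.E ∧ (x.1, y.1) ∉ N) ∨ (x, y) ∈ N'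

/-- The weight `wt_N(x,y) = vote_a(b, N*(a_i)) + vote_b(a, N*(b_j))` of an edge of `G'_N`
lying in `A' × B'` (a last-resort partner in `N*` is read as null). -/
noncomputable def wtE (N' : Finset (I.CloneA × I.CloneB))
    (x : I.CloneA) (y : I.CloneB) : ℤ :=
  vote (I.rankA x.1) (some y.1) (Option.map Sigma.fst (I.partnerA N' x)) +
  vote (I.rankB y.1) (some x.1) (Option.map Sigma.fst (I.partnerB N' y))

/-- A one-to-one matching on the clone sets (each clone is in at most one edge).
Together with the implicit last-resort edges for unmatched clones, this represents
an `(A' ∪ B')`-complete matching in `G'_N`. -/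
def IsCloneMatching (T' : Finset (I.CloneA × I.CloneB)) : Prop :=
  (∀ e ∈ T', ∀ f ∈ T', e.1 = f.1 → e = f) ∧ (∀ e ∈ T', ∀ f ∈ T', e.2 = f.2 → e = f)

/-- The weight `wt_N` of the `(A' ∪ B')`-complete matching represented by `T'`:
the sum of the weights of its `A' × B'` edges plus, for every clone left unmatched
in `T'` (hence matched to its last resort), the weight `wt_N(v, ℓ(v))`, which is
`-1` if `v` is matched in `N'` and `0` otherwise. -/
noncomputable def wtTotal (N' T' : Finset (I.CloneA × I.CloneB)) : ℤ :=
  (∑ e ∈ T', I.wtE N' e.1 e.2) +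
  (∑ x : I.CloneA,
    if ∀ y, (x, y) ∉ T' then (if ∃ y, (x, y) ∈ N' then (-1 : ℤ) else 0) else 0) +
  (∑ y : I.CloneB,
    if ∀ x, (x, y) ∉ T' then (if ∃ x, (x, y) ∈ N' then (-1 : ℤ) else 0) else 0)

/-- A 2-level witness for `N` (with realization `N'`): partitions
`A' = A'₀ ∪ A'₁` and `B' = B'₀ ∪ B'₁` (encoded by level functions `lA, lB`, where
`true` means level 1) such that clones of `A'` unmatched in `N'` are in `A'₁`, clones
of `B'` unmatched in `N'` are in `B'₀`, `N' ⊆ (A'₀ × B'₀) ∪ (A'₁ × B'₁)`, every edge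
of `G'_N` in `A'₁ × B'₀` has weight `-2`, and every edge of `G'_N` in
`(A'₀ × B'₀) ∪ (A'₁ × B'₁)` has weight `≤ 0`. -/
def TwoLevelWitness (N : Finset (α × β)) (N' : Finset (I.CloneA × I.CloneB))
    (lA : I.CloneA → Bool) (lB : I.CloneB → Bool) : Prop :=
  (∀ x : I.CloneA, (∀ y, (x, y) ∉ N') → lA x = true) ∧
  (∀ y : I.CloneB, (∀ x, (x, y) ∉ N') → lB y = false) ∧
  (∀ e ∈ N', lA e.1 = lB e.2) ∧
  (∀ x y, I.GNEdge N N' x y → lA x = true → lB y = false → I.wtE N' x y = -2) ∧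
  (∀ x y, I.GNEdge N N' x y → lA x = lB y → I.wtE N' x y ≤ 0)

end PrefInstance

/-!
The weight of a complete matching `T*` of `G'_N` is the sum, over all clones `v`, of the vote of `v`
for `T*(v)` against `N*(v)`. So it suffices to distribute the partners `T(u)` of each vertex `u`
over the clones of `u` in such a way that the votes of these clones add up to `-δ_u(N(u), T(u))`.

At one vertex `u`, take a permutation `σ` attaining the minimum in `δ_u(N(u), T(u))`. Up to
reindexing, the clones of `u`, labelled by their partners in `N'`, are the padded array of
`N(u) ∖ T(u)` followed by the common partners `N(u) ∩ T(u)` and by nulls; there are enough clones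
because `|T(u)| ≤ cap(u)`. Let each clone in the padded array exchange its partner for the one that
`σ` compares it with, and let all other clones keep theirs. The votes then sum to `-δ_u`, as votes
are antisymmetric for strict preferences.

An edge `(a, b)` of `T` is realized by joining the clone of `a` that received `b` to the clone of
`b` that received `a`. If `(a, b)` also lies in `N`, both are the ends of the copy of `(a, b)` in
`N'`, because common partners were kept, so only edges of `G'_N` are used.
-/

/-! ### Enumerations of a finite set by arrays with null entries -/

/-- The array `f`, whose null entries are `none`, lists every element of `S` exactly once and has no
other non-null entry. It describes a distribution of the partners in `S` over the clones of a
vertex, as well as the padded arrays in the definition of `δ`. -/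
structure Enumerates {X γ : Type*} (f : X → Option γ) (S : Finset γ) : Prop where
  mem_iff (s : γ) : s ∈ S ↔ ∃ x, f x = some s
  index_unique {x y : X} {s : γ} : f x = some s → f y = some s → x = y

namespace Enumerates

variable {X Y γ : Type*} {f : X → Option γ} {g : Y → Option γ} {S R : Finset γ}

lemma mem (hf : Enumerates f S) {x : X} {s : γ} (hx : f x = some s) : s ∈ S :=
  (hf.mem_iff s).2 ⟨x, hx⟩

lemma comp_equiv (hg : Enumerates g S) (e : X ≃ Y) : Enumerates (fun x => g (e x)) S where
  mem_iff s := (hg.mem_iff s).trans e.surjective.exists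
  index_unique hx hy := e.injective (hg.index_unique hx hy)

lemma sumElim [DecidableEq γ] (hf : Enumerates f S) (hg : Enumerates g R) (hSR : Disjoint S R) :
    Enumerates (Sum.elim f g) (S ∪ R) where
  mem_iff s := by simp [hf.mem_iff, hg.mem_iff]
  index_unique := by
    rintro (x | x) (y | y) s hx hy
    · exact congrArg Sum.inl (hf.index_unique hx hy)
    · exact absurd (hg.mem hy) (Finset.disjoint_left.1 hSR (hf.mem hx))
    · exact absurd (hg.mem hx) (Finset.disjoint_left.1 hSR (hf.mem hy))
    · exact congrArg Sum.inr (hg.index_unique hx hy)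

variable [Fintype X] [Fintype Y]

lemma card_fiber_some [DecidableEq γ] (hf : Enumerates f S) (s : γ) :
    Fintype.card {x // f x = some s} = if s ∈ S then 1 else 0 := by
  split_ifs with hs
  · obtain ⟨x, hx⟩ := (hf.mem_iff s).1 hs
    exact Fintype.card_eq_one_iff.2
      ⟨⟨x, hx⟩, fun y => Subtype.ext (hf.index_unique y.2 hx)⟩
  · exact Fintype.card_eq_zero_iff.2 ⟨fun x => hs (hf.mem x.2)⟩

lemma card_fiber_none_add_card (hf : Enumerates f S) :
    Fintype.card {x // f x = none} + S.card = Fintype.card X := by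
  classical
  have hmaps : ∀ x ∈ Finset.univ, f x ∈ Finset.insertNone S := fun x _ =>
    Finset.mem_insertNone.2 fun _ hs => hf.mem hs
  have hsome : ∀ s ∈ S, (Finset.univ.filter fun x => f x = some s).card = 1 := fun s hs => by
    rw [← Fintype.card_subtype, hf.card_fiber_some, if_pos hs]
  rw [← Finset.card_univ (α := X), Finset.card_eq_sum_card_fiberwise hmaps, Finset.sum_insertNone,
    Finset.sum_congr rfl hsome, ← Finset.card_eq_sum_ones, Fintype.card_subtype]

lemma exists_equiv (hf : Enumerates f S) (hg : Enumerates g S)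
    (hXY : Fintype.card X = Fintype.card Y) : ∃ e : X ≃ Y, ∀ x, g (e x) = f x := by
  classical
  have fiberEquiv : ∀ o, Nonempty ({x // f x = o} ≃ {y // g y = o}) := by
    intro o
    rw [← Fintype.card_eq]
    cases o with
    | none =>
      have hf_card := hf.card_fiber_none_add_card
      have hg_card := hg.card_fiber_none_add_card
      omega
    | some s => rw [hf.card_fiber_some, hg.card_fiber_some]
  exact ⟨Equiv.ofFiberEquiv fun o => (fiberEquiv o).some, Equiv.ofFiberEquiv_map _⟩

end Enumerates

section padded

variable {γ : Type*} [DecidableEq γ] (S₀ S₁ : Finset γ)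

lemma padded_getD_eq_some_iff (k i : ℕ) (s : γ) :
    (padded S₀ S₁ k).getD i none = some s ↔ (S₀ \ S₁).toList[i]? = some s := by
  rw [padded, List.getD_eq_getElem?_getD, List.getElem?_append, List.length_map]
  split_ifs with hi
  · simp [List.getElem?_eq_getElem hi]
  · rw [List.getElem?_replicate, List.getElem?_eq_none (not_lt.1 hi)]
    split_ifs <;> simp

lemma enumerates_padded {k : ℕ} (hk : (S₀ \ S₁).card ≤ k) :
    Enumerates (fun i : Fin k => (padded S₀ S₁ k).getD (i : ℕ) none) (S₀ \ S₁) where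
  mem_iff s := by
    simp only [padded_getD_eq_some_iff]
    rw [← Finset.mem_toList, List.mem_iff_getElem?]
    refine ⟨fun ⟨i, hi⟩ => ?_, fun ⟨i, hi⟩ => ⟨i, hi⟩⟩
    have hlt : i < (S₀ \ S₁).toList.length := (List.getElem?_eq_some_iff.1 hi).1
    rw [Finset.length_toList] at hlt
    exact ⟨⟨i, hlt.trans_le hk⟩, hi⟩
  index_unique hi hj := by
    rw [padded_getD_eq_some_iff] at hi hj
    have hlt := (List.getElem?_eq_some_iff.1 hi).1
    exact Fin.ext ((List.getElem?_inj hlt (Finset.nodup_toList _)).1 (hi.trans hj.symm))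

lemma kOf_add_card_inter : kOf S₀ S₁ + (S₀ ∩ S₁).card = max S₀.card S₁.card :=
  Nat.sub_add_cancel ((Finset.card_le_card Finset.inter_subset_left).trans (le_max_left _ _))

lemma exists_enumerates_deltaSet_eq (r : γ → ℕ) :
    ∃ u v : Fin (kOf S₀ S₁) → Option γ, Enumerates u (S₀ \ S₁) ∧ Enumerates v (S₁ \ S₀) ∧
      deltaSet r S₀ S₁ = ∑ i, vote r (u i) (v i) := by
  have hk := kOf_add_card_inter S₀ S₁
  have h₀ := Finset.card_sdiff_add_card_inter S₀ S₁
  have h₁ := Finset.card_sdiff_add_card_inter S₁ S₀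
  rw [Finset.inter_comm] at h₁
  obtain ⟨σ, -, hσ⟩ := Finset.exists_mem_eq_inf' ⟨1, Finset.mem_univ 1⟩
    fun σ : Equiv.Perm (Fin (kOf S₀ S₁)) => ∑ i : Fin (kOf S₀ S₁),
      vote r ((padded S₀ S₁ (kOf S₀ S₁)).getD (i : ℕ) none)
        ((padded S₁ S₀ (kOf S₀ S₁)).getD (σ i : ℕ) none)
  exact ⟨_, _, enumerates_padded S₀ S₁ (by omega),
    (enumerates_padded S₁ S₀ (by omega)).comp_equiv σ, hσ⟩

end padded

lemma exists_enumerates_fin {γ : Type*} (S : Finset γ) {n : ℕ} (hn : S.card ≤ n) :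
    ∃ f : Fin n → Option γ, Enumerates f S := by
  classical
  rw [← Finset.sdiff_empty (s := S)] at hn ⊢
  exact ⟨_, enumerates_padded S ∅ hn⟩

/-! ### Redistributing the partners of a vertex over its clones -/

section vote

variable {γ : Type*} [DecidableEq γ] (r : γ → ℕ)

lemma vote_self (o : Option γ) : vote r o o = 0 := by
  cases o <;> simp [vote]

lemma neg_vote_s3 {S : Set γ} (hr : Set.InjOn r S) {o o' : Option γ}
    (ho : ∀ s, o = some s → s ∈ S) (ho' : ∀ s, o' = some s → s ∈ S) :
    -vote r o o' = vote r o' o := by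
  rcases o with _ | s <;> rcases o' with _ | s'
  · rfl
  · rfl
  · rfl
  · by_cases hs : s = s'
    · simp [vote, hs]
    · have hrs : r s ≠ r s' := hr.ne (ho s rfl) (ho' s' rfl) hs
      simp only [vote, if_neg hs, if_neg (Ne.symm hs)]
      split_ifs <;> omega

end vote

section assignment

variable {X Y γ : Type*} [Fintype X] [DecidableEq γ]

/-- The enumeration `p` of `S₀` consists of `u`, of the common elements of `S₀` and `S₁`, and of
nulls; replacing its part `u` by `v` gives an enumeration of `S₁`. -/
lemma Enumerates.exists_exchange [Fintype Y] {p : X → Option γ} {u v : Y → Option γ}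
    {S₀ S₁ : Finset γ} (hp : Enumerates p S₀) (hu : Enumerates u (S₀ \ S₁))
    (hv : Enumerates v (S₁ \ S₀)) (hcard : Fintype.card Y + (S₀ ∩ S₁).card ≤ Fintype.card X)
    {A : Type*} [AddCommMonoid A] (F : Option γ → Option γ → A) (hF : ∀ o, F o o = 0) :
    ∃ q : X → Option γ, Enumerates q S₁ ∧ (∀ x, ∀ s ∈ S₁, p x = some s → q x = some s) ∧
      ∑ x, F (q x) (p x) = ∑ y, F (v y) (u y) := by
  obtain ⟨w, hw⟩ := exists_enumerates_fin (S₀ ∩ S₁) (Nat.le_sub_of_add_le' hcard)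
  have huw : Enumerates (Sum.elim u w) S₀ := by
    simpa only [Finset.sdiff_union_inter] using hu.sumElim hw (Finset.disjoint_sdiff_inter S₀ S₁)
  have hvw : Enumerates (Sum.elim v w) S₁ := by
    rw [Finset.inter_comm] at hw
    simpa only [Finset.sdiff_union_inter] using hv.sumElim hw (Finset.disjoint_sdiff_inter S₁ S₀)
  obtain ⟨e, he⟩ := hp.exists_equiv huw (by
    rw [Fintype.card_sum, Fintype.card_fin]
    omega)
  refine ⟨fun x => Sum.elim v w (e x), hvw.comp_equiv e, fun x s hs hx => ?_, ?_⟩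
  · rw [← he x] at hx
    rcases hex : e x with y | i <;> rw [hex] at hx
    · exact absurd hs (Finset.mem_sdiff.1 (hu.mem hx)).2
    · simpa only [hex, Sum.elim_inr] using hx
  · simp only [← he]
    rw [e.sum_comp fun z => F (Sum.elim v w z) (Sum.elim u w z), Fintype.sum_sum_type]
    simp only [Sum.elim_inl, Sum.elim_inr, hF, Finset.sum_const_zero, add_zero]

lemma exists_assignment (r : γ → ℕ) {p : X → Option γ} {S₀ S₁ : Finset γ} (hp : Enumerates p S₀)
    (hr : Set.InjOn r (S₀ ∪ S₁)) (hcard : S₁.card ≤ Fintype.card X) :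
    ∃ q : X → Option γ, Enumerates q S₁ ∧ (∀ x, ∀ s ∈ S₁, p x = some s → q x = some s) ∧
      ∑ x, vote r (q x) (p x) = -deltaSet r S₀ S₁ := by
  obtain ⟨u, v, hu, hv, hδ⟩ := exists_enumerates_deltaSet_eq S₀ S₁ r
  have hS₀ : S₀.card ≤ Fintype.card X := by
    rw [← hp.card_fiber_none_add_card]
    exact Nat.le_add_left _ _
  obtain ⟨q, hq, hkeep, hsum⟩ := hp.exists_exchange hu hv
    (by rw [Fintype.card_fin, kOf_add_card_inter]; exact max_le hS₀ hcard) (vote r) (vote_self r)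
  refine ⟨q, hq, hkeep, ?_⟩
  rw [hsum, hδ, ← Finset.sum_neg_distrib]
  exact Finset.sum_congr rfl fun i _ => (neg_vote_s3 r hr
    (fun _ hs => Or.inl (Finset.mem_sdiff.1 (hu.mem hs)).1)
    (fun _ hs => Or.inr (Finset.mem_sdiff.1 (hv.mem hs)).1)).symm

lemma exists_assignment_sigma {V : Type*} {C : V → Type*} [Fintype V] [∀ u, Fintype (C u)]
    (r : V → γ → ℕ) {p : (Σ u, C u) → Option γ} {S₀ S₁ : V → Finset γ}
    (hp : ∀ u, Enumerates (fun i => p ⟨u, i⟩) (S₀ u))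
    (hr : ∀ u, Set.InjOn (r u) (S₀ u ∪ S₁ u)) (hcard : ∀ u, (S₁ u).card ≤ Fintype.card (C u)) :
    ∃ q : (Σ u, C u) → Option γ, (∀ u, Enumerates (fun i => q ⟨u, i⟩) (S₁ u)) ∧
      (∀ x, ∀ s ∈ S₁ x.1, p x = some s → q x = some s) ∧
      ∑ x, vote (r x.1) (q x) (p x) = -∑ u, deltaSet (r u) (S₀ u) (S₁ u) := by
  choose q hq hkeep hsum using fun u => exists_assignment (r u) (hp u) (hr u) (hcard u)
  refine ⟨fun x => q x.1 x.2, hq, fun x => hkeep x.1 x.2, ?_⟩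
  rw [Fintype.sum_sigma, ← Finset.sum_neg_distrib]
  exact Finset.sum_congr rfl fun u _ => hsum u

end assignment

/-! ### Partners and weights in matchings of clones -/

lemma dite_choose_eq_some_iff {X : Type*} {P : X → Prop} [Decidable (∃ x, P x)]
    (hP : ∀ x y, P x → P y → x = y) (x : X) :
    (if h : ∃ x, P x then some h.choose else none) = some x ↔ P x := by
  split_ifs with h
  · rw [Option.some.injEq]
    exact ⟨fun hx => hx ▸ h.choose_spec, hP _ _ h.choose_spec⟩
  · exact iff_of_false (by simp) fun hx => h ⟨x, hx⟩

lemma sum_comp_add_sum_ite_forall_ne {ι X A : Type*} [Fintype X] [AddCommMonoid A]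
    {s : Finset ι} {φ : ι → X} (hφ : Set.InjOn φ s) (g : X → A)
    [DecidablePred fun x => ∀ e ∈ s, φ e ≠ x] :
    ∑ e ∈ s, g (φ e) + ∑ x, (if ∀ e ∈ s, φ e ≠ x then g x else 0) = ∑ x, g x := by
  classical
  rw [← Finset.sum_image hφ, ← Finset.sum_filter, ← Finset.sum_add_sum_compl (s.image φ) g]
  congr 2
  ext x
  simp

namespace PrefInstance

variable {α β : Type*} [DecidableEq α] [DecidableEq β]

lemma mem_rowSet [Fintype β] {T : Finset (α × β)} {a : α} {b : β} :
    b ∈ rowSet T a ↔ (a, b) ∈ T := by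
  simp [rowSet]

lemma mem_colSet [Fintype α] {T : Finset (α × β)} {a : α} {b : β} :
    a ∈ colSet T b ↔ (a, b) ∈ T := by
  simp [colSet]

variable [Fintype α] [Fintype β]
variable {I : PrefInstance α β} {N T : Finset (α × β)} {N' T' : Finset (I.CloneA × I.CloneB)}

lemma injOn_rankA (hN : N ⊆ I.E) (hT : T ⊆ I.E) (a : α) :
    Set.InjOn (I.rankA a) (rowSet N a ∪ rowSet T a) :=
  (I.rankA_injOn a).mono <| Set.union_subset
    (fun _ hb => hN (mem_rowSet.1 hb)) (fun _ hb => hT (mem_rowSet.1 hb))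

lemma injOn_rankB (hN : N ⊆ I.E) (hT : T ⊆ I.E) (b : β) :
    Set.InjOn (I.rankB b) (colSet N b ∪ colSet T b) :=
  (I.rankB_injOn b).mono <| Set.union_subset
    (fun _ ha => hN (mem_colSet.1 ha)) (fun _ ha => hT (mem_colSet.1 ha))

namespace IsCloneMatching

lemma partnerA_eq_some_iff (h : I.IsCloneMatching T') {x : I.CloneA} {y : I.CloneB} :
    I.partnerA T' x = some y ↔ (x, y) ∈ T' :=
  dite_choose_eq_some_iff (P := fun y => (x, y) ∈ T')
    (fun _ _ hy hz => congrArg Prod.snd (h.1 _ hy _ hz rfl)) y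

lemma partnerB_eq_some_iff (h : I.IsCloneMatching T') {x : I.CloneA} {y : I.CloneB} :
    I.partnerB T' y = some x ↔ (x, y) ∈ T' :=
  dite_choose_eq_some_iff (P := fun x => (x, y) ∈ T')
    (fun _ _ hx hz => congrArg Prod.fst (h.2 _ hx _ hz rfl)) x

lemma map_partnerA_eq_some_iff (h : I.IsCloneMatching T') {x : I.CloneA} {b : β} :
    (I.partnerA T' x).map Sigma.fst = some b ↔ ∃ j, (x, ⟨b, j⟩) ∈ T' := by
  simp [Option.map_eq_some_iff, h.partnerA_eq_some_iff, Sigma.exists]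

lemma map_partnerB_eq_some_iff (h : I.IsCloneMatching T') {y : I.CloneB} {a : α} :
    (I.partnerB T' y).map Sigma.fst = some a ↔ ∃ i, (⟨a, i⟩, y) ∈ T' := by
  simp [Option.map_eq_some_iff, h.partnerB_eq_some_iff, Sigma.exists]

end IsCloneMatching

lemma vote_none_map_partnerA (r : β → ℕ) (x : I.CloneA) :
    vote r none ((I.partnerA N' x).map Sigma.fst) = if ∃ y, (x, y) ∈ N' then -1 else 0 := by
  unfold partnerA
  split_ifs <;> rfl

lemma vote_none_map_partnerB (r : α → ℕ) (y : I.CloneB) :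
    vote r none ((I.partnerB N' y).map Sigma.fst) = if ∃ x, (x, y) ∈ N' then -1 else 0 := by
  unfold partnerB
  split_ifs <;> rfl

lemma partnerA_eq_none {x : I.CloneA} (hx : ∀ y, (x, y) ∉ T') : I.partnerA T' x = none :=
  dif_neg (not_exists.2 hx)

lemma partnerB_eq_none {y : I.CloneB} (hy : ∀ x, (x, y) ∉ T') : I.partnerB T' y = none :=
  dif_neg (not_exists.2 hy)

namespace IsCloneMatching

lemma sum_vote_map_partnerA (h : I.IsCloneMatching T') :
    ∑ e ∈ T', vote (I.rankA e.1.1) (some e.2.1) ((I.partnerA N' e.1).map Sigma.fst) +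
      ∑ x : I.CloneA,
        (if ∀ y, (x, y) ∉ T' then (if ∃ y, (x, y) ∈ N' then (-1 : ℤ) else 0) else 0) =
    ∑ x : I.CloneA, vote (I.rankA x.1) ((I.partnerA T' x).map Sigma.fst)
      ((I.partnerA N' x).map Sigma.fst) := by
  have hinj : Set.InjOn Prod.fst (T' : Set (I.CloneA × I.CloneB)) := fun e he f hf => h.1 e he f hf
  refine Eq.trans ?_ (sum_comp_add_sum_ite_forall_ne hinj _)
  congr 1
  · refine Finset.sum_congr rfl fun e he => ?_
    rw [h.partnerA_eq_some_iff.2 he, Option.map_some]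
  · refine Finset.sum_congr rfl fun x _ => ?_
    have hiff : (∀ y, (x, y) ∉ T') ↔ ∀ e ∈ T', e.1 ≠ x :=
      ⟨fun hx e he hex => hx e.2 (hex ▸ he), fun hx y hy => hx _ hy rfl⟩
    refine if_ctx_congr hiff (fun hx => ?_) fun _ => rfl
    rw [partnerA_eq_none (hiff.2 hx), Option.map_none, vote_none_map_partnerA]

lemma sum_vote_map_partnerB (h : I.IsCloneMatching T') :
    ∑ e ∈ T', vote (I.rankB e.2.1) (some e.1.1) ((I.partnerB N' e.2).map Sigma.fst) +
      ∑ y : I.CloneB,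
        (if ∀ x, (x, y) ∉ T' then (if ∃ x, (x, y) ∈ N' then (-1 : ℤ) else 0) else 0) =
    ∑ y : I.CloneB, vote (I.rankB y.1) ((I.partnerB T' y).map Sigma.fst)
      ((I.partnerB N' y).map Sigma.fst) := by
  have hinj : Set.InjOn Prod.snd (T' : Set (I.CloneA × I.CloneB)) := fun e he f hf => h.2 e he f hf
  refine Eq.trans ?_ (sum_comp_add_sum_ite_forall_ne hinj _)
  congr 1
  · refine Finset.sum_congr rfl fun e he => ?_
    rw [h.partnerB_eq_some_iff.2 he, Option.map_some]
  · refine Finset.sum_congr rfl fun y _ => ?_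
    have hiff : (∀ x, (x, y) ∉ T') ↔ ∀ e ∈ T', e.2 ≠ y :=
      ⟨fun hy e he hey => hy e.1 (hey ▸ he), fun hy x hx => hy _ hx rfl⟩
    refine if_ctx_congr hiff (fun hy => ?_) fun _ => rfl
    rw [partnerB_eq_none (hiff.2 hy), Option.map_none, vote_none_map_partnerB]

lemma wtTotal_eq_sum_vote (h : I.IsCloneMatching T') :
    I.wtTotal N' T' =
      ∑ x : I.CloneA, vote (I.rankA x.1) ((I.partnerA T' x).map Sigma.fst)
        ((I.partnerA N' x).map Sigma.fst) +
      ∑ y : I.CloneB, vote (I.rankB y.1) ((I.partnerB T' y).map Sigma.fst)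
        ((I.partnerB N' y).map Sigma.fst) := by
  rw [← h.sum_vote_map_partnerA, ← h.sum_vote_map_partnerB]
  simp only [wtTotal, wtE, Finset.sum_add_distrib]
  ring

end IsCloneMatching

/-! ### Realizations -/

namespace IsRealization

lemma isCloneMatching (h : I.IsRealization N N') : I.IsCloneMatching N' :=
  ⟨h.1, h.2.1⟩

lemma mem_iff (h : I.IsRealization N N') {a : α} {b : β} :
    (a, b) ∈ N ↔ ∃ i j, ((⟨a, i⟩, ⟨b, j⟩) : I.CloneA × I.CloneB) ∈ N' := by
  rw [← h.2.2.1, Finset.mem_image]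
  constructor
  · rintro ⟨⟨⟨a, i⟩, ⟨b, j⟩⟩, he, ⟨⟩⟩
    exact ⟨i, j, he⟩
  · rintro ⟨i, j, he⟩
    exact ⟨_, he, rfl⟩

lemma injOn_proj (h : I.IsRealization N N') :
    Set.InjOn (fun e : I.CloneA × I.CloneB => (e.1.1, e.2.1)) N' := by
  rw [← Finset.card_image_iff, h.2.2.1, h.2.2.2]

lemma enumerates_partnerA (h : I.IsRealization N N') (a : α) :
    Enumerates (fun i => (I.partnerA N' ⟨a, i⟩).map Sigma.fst) (rowSet N a) where
  mem_iff b := by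
    simp only [mem_rowSet, h.mem_iff, h.isCloneMatching.map_partnerA_eq_some_iff]
  index_unique hi hj := by
    obtain ⟨_, hi⟩ := h.isCloneMatching.map_partnerA_eq_some_iff.1 hi
    obtain ⟨_, hj⟩ := h.isCloneMatching.map_partnerA_eq_some_iff.1 hj
    simpa using congrArg Prod.fst (h.injOn_proj hi hj rfl)

lemma enumerates_partnerB (h : I.IsRealization N N') (b : β) :
    Enumerates (fun j => (I.partnerB N' ⟨b, j⟩).map Sigma.fst) (colSet N b) where
  mem_iff a := by
    simp only [mem_colSet, h.mem_iff, h.isCloneMatching.map_partnerB_eq_some_iff]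
    exact exists_comm
  index_unique hi hj := by
    obtain ⟨_, hi⟩ := h.isCloneMatching.map_partnerB_eq_some_iff.1 hi
    obtain ⟨_, hj⟩ := h.isCloneMatching.map_partnerB_eq_some_iff.1 hj
    simpa using congrArg Prod.snd (h.injOn_proj hi hj rfl)

end IsRealization

/-! ### Joining clones along assigned partners -/

/-- Given partners `qA`, `qB` assigned to the clones, the set of edges that join a clone of `a`
assigned to `b` to a clone of `b` assigned to `a`. -/
def assignedEdges (qA : I.CloneA → Option β) (qB : I.CloneB → Option α) :
    Finset (I.CloneA × I.CloneB) :=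
  Finset.univ.filter fun e => qA e.1 = some e.2.1 ∧ qB e.2 = some e.1.1

section assignedEdges

variable {qA : I.CloneA → Option β} {qB : I.CloneB → Option α}

lemma mem_assignedEdges {e : I.CloneA × I.CloneB} :
    e ∈ assignedEdges qA qB ↔ qA e.1 = some e.2.1 ∧ qB e.2 = some e.1.1 := by
  simp [assignedEdges]

variable (hqA : ∀ a, Enumerates (fun i => qA ⟨a, i⟩) (rowSet T a))
  (hqB : ∀ b, Enumerates (fun j => qB ⟨b, j⟩) (colSet T b))
include hqA hqB

lemma isCloneMatching_assignedEdges : I.IsCloneMatching (assignedEdges qA qB) := by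
  simp only [IsCloneMatching, mem_assignedEdges]
  constructor
  · rintro ⟨x, b, j⟩ ⟨he₁, he₂⟩ ⟨_, b', j'⟩ ⟨hf₁, hf₂⟩ rfl
    obtain rfl : b = b' := Option.some_injective _ (he₁.symm.trans hf₁)
    obtain rfl : j = j' := (hqB b).index_unique he₂ hf₂
    rfl
  · rintro ⟨⟨a, i⟩, y⟩ ⟨he₁, he₂⟩ ⟨⟨a', i'⟩, _⟩ ⟨hf₁, hf₂⟩ rfl
    obtain rfl : a = a' := Option.some_injective _ (he₂.symm.trans hf₂)
    obtain rfl : i = i' := (hqA a).index_unique he₁ hf₁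
    rfl

lemma map_partnerA_assignedEdges (x : I.CloneA) :
    (I.partnerA (assignedEdges qA qB) x).map Sigma.fst = qA x := by
  ext b
  rw [(isCloneMatching_assignedEdges hqA hqB).map_partnerA_eq_some_iff]
  simp only [mem_assignedEdges, exists_and_left, and_iff_left_iff_imp]
  intro hb
  exact ((hqB b).mem_iff x.1).1 (mem_colSet.2 (mem_rowSet.1 ((hqA x.1).mem hb)))

lemma map_partnerB_assignedEdges (y : I.CloneB) :
    (I.partnerB (assignedEdges qA qB) y).map Sigma.fst = qB y := by
  ext a
  rw [(isCloneMatching_assignedEdges hqA hqB).map_partnerB_eq_some_iff]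
  simp only [mem_assignedEdges, exists_and_right, and_iff_right_iff_imp]
  intro ha
  exact ((hqA a).mem_iff y.1).1 (mem_rowSet.2 (mem_colSet.1 ((hqB y.1).mem ha)))

lemma gnEdge_of_mem_assignedEdges (hN' : I.IsRealization N N') (hT : T ⊆ I.E)
    (hkeepA : ∀ x, ∀ b ∈ rowSet T x.1, (I.partnerA N' x).map Sigma.fst = some b → qA x = some b)
    (hkeepB : ∀ y, ∀ a ∈ colSet T y.1, (I.partnerB N' y).map Sigma.fst = some a → qB y = some a)
    {e : I.CloneA × I.CloneB} (he : e ∈ assignedEdges qA qB) : I.GNEdge N N' e.1 e.2 := by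
  obtain ⟨⟨a, i⟩, ⟨b, j⟩⟩ := e
  obtain ⟨heA, heB⟩ := mem_assignedEdges.1 he
  have habT : (a, b) ∈ T := mem_rowSet.1 ((hqA a).mem heA)
  by_cases habN : (a, b) ∈ N
  · obtain ⟨i', j', hij⟩ := hN'.mem_iff.1 habN
    have hi' : qA ⟨a, i'⟩ = some b := hkeepA _ b (mem_rowSet.2 habT)
      (hN'.isCloneMatching.map_partnerA_eq_some_iff.2 ⟨j', hij⟩)
    have hj' : qB ⟨b, j'⟩ = some a := hkeepB _ a (mem_colSet.2 habT)
      (hN'.isCloneMatching.map_partnerB_eq_some_iff.2 ⟨i', hij⟩)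
    obtain rfl : i = i' := (hqA a).index_unique heA hi'
    obtain rfl : j = j' := (hqB b).index_unique heB hj'
    exact Or.inr hij
  · exact Or.inl ⟨hT habT, habN⟩

end assignedEdges

end PrefInstance

/-- Let `N` be a matching in `G` (with a fixed realization `N'` on the
cloned vertex sets). For every matching `T` in `G` there is an `(A' ∪ B')`-complete
matching `T*` of `G'_N` (represented by its set `T'` of `A' × B'` edges) with
`wt_N(T*) = −Δ(N,T)`. -/
theorem statement3 {α β : Type*} [Fintype α] [Fintype β] [DecidableEq α] [DecidableEq β]
    (I : PrefInstance α β) (N : Finset (α × β)) (hN : I.IsMatching N)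
    (N' : Finset (I.CloneA × I.CloneB)) (hN' : I.IsRealization N N')
    (T : Finset (α × β)) (hT : I.IsMatching T) :
    ∃ T' : Finset (I.CloneA × I.CloneB),
      I.IsCloneMatching T' ∧ (∀ e ∈ T', I.GNEdge N N' e.1 e.2) ∧
      I.wtTotal N' T' = - I.Delta N T := by
  obtain ⟨qA, hqA, hkeepA, hsumA⟩ := exists_assignment_sigma I.rankA
    (p := fun x => (I.partnerA N' x).map Sigma.fst) hN'.enumerates_partnerA
    (PrefInstance.injOn_rankA hN.1 hT.1) (by simpa using hT.2.1)
  obtain ⟨qB, hqB, hkeepB, hsumB⟩ := exists_assignment_sigma I.rankB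
    (p := fun y => (I.partnerB N' y).map Sigma.fst) hN'.enumerates_partnerB
    (PrefInstance.injOn_rankB hN.1 hT.1) (by simpa using hT.2.2)
  have hM := PrefInstance.isCloneMatching_assignedEdges hqA hqB
  refine ⟨PrefInstance.assignedEdges qA qB, hM, fun e he =>
    PrefInstance.gnEdge_of_mem_assignedEdges hqA hqB hN' hT.1 hkeepA hkeepB he, ?_⟩
  rw [hM.wtTotal_eq_sum_vote]
  simp only [PrefInstance.map_partnerA_assignedEdges hqA hqB,
    PrefInstance.map_partnerB_assignedEdges hqA hqB, hsumA, hsumB]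
  exact (neg_add _ _).symm
end
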